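/- For a function f of sublinear growth on the standard Cayley graph of ℤ^d that is harmonic, f is constant. (Special case: any harmonic function on ℤ with f(n) = (f(n−1)+f(n+1))/2 and f(n)/|n| → 0 as |n| → ∞ is constant.) -/

import Mathlib

open Filter

def HarmZd (d : ℕ) (f : (Fin d → ℤ) → ℝ) : Prop :=
  ∀ v : Fin d → ℤ, (2 * d : ℝ) * f v =
      ∑ i : Fin d, (f (v + Pi.single i 1) + f (v - Pi.single i 1))

def reflZd {d : ℕ} (i : Fin d) (x : Fin d → ℤ) : Fin d → ℤ := Function.update x i (-x i)

lemma reflZd_pair {d : ℕ} (i j : Fin d) (x : Fin d → ℤ) (f : (Fin d → ℤ) → ℝ) :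
    f (reflZd i (x + Pi.single j 1)) + f (reflZd i (x - Pi.single j 1)) =
      f (reflZd i x + Pi.single j 1) + f (reflZd i x - Pi.single j 1) := by
  by_cases h : j = i
  · subst h
    have h1 : reflZd j (x + Pi.single j 1) = reflZd j x - Pi.single j 1 := by
      ext k
      by_cases hk : k = j
      · subst hk; simp [reflZd]; ring
      · simp [reflZd, hk]
    have h2 : reflZd j (x - Pi.single j 1) = reflZd j x + Pi.single j 1 := by
      ext k
      by_cases hk : k = j
      · subst hk; simp [reflZd]; ring
      · simp [reflZd, hk]
    rw [h1, h2, add_comm]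
  · have h1 : reflZd i (x + Pi.single j 1) = reflZd i x + Pi.single j 1 := by
      ext k
      by_cases hk : k = i
      · subst hk; simp [reflZd, Ne.symm h]
      · simp [reflZd, hk]
    have h2 : reflZd i (x - Pi.single j 1) = reflZd i x - Pi.single j 1 := by
      ext k
      by_cases hk : k = i
      · subst hk; simp [reflZd, Ne.symm h]
      · simp [reflZd, hk]
    rw [h1, h2]

def qZd {d : ℕ} (i : Fin d) (R : ℝ) (x : Fin d → ℤ) : ℝ :=
  (d + 1) * R * x i - (d + 1) * (x i : ℝ) ^ 2 + ∑ j, (x j : ℝ) ^ 2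

lemma sqsum_pair {d : ℕ} (j : Fin d) (x : Fin d → ℤ) :
    ∑ k, (((x + Pi.single j 1 : Fin d → ℤ) k : ℤ) : ℝ) ^ 2 +
      ∑ k, (((x - Pi.single j 1 : Fin d → ℤ) k : ℤ) : ℝ) ^ 2
      = 2 * ∑ k, (x k : ℝ) ^ 2 + 2 := by
  rw [← Finset.sum_add_distrib, Finset.mul_sum]
  have : ∑ k, 2 * (x k : ℝ) ^ 2 + 2 =
      ∑ k, 2 * (x k : ℝ) ^ 2 + ∑ k : Fin d, if k = j then (2 : ℝ) else 0 := by simp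
  rw [this, ← Finset.sum_add_distrib]
  refine Finset.sum_congr rfl fun k _ => ?_
  by_cases hk : k = j
  · subst hk; simp; ring
  · simp [hk]; ring

lemma qZd_pair {d : ℕ} (i j : Fin d) (R : ℝ) (x : Fin d → ℤ) :
    qZd i R (x + Pi.single j 1) + qZd i R (x - Pi.single j 1) =
      2 * qZd i R x + 2 - (if j = i then 2 * ((d : ℝ) + 1) else 0) := by
  have := sqsum_pair j x
  unfold qZd
  by_cases h : j = i
  · subst h
    have e1 : (((x + Pi.single j 1 : Fin d → ℤ) j : ℤ) : ℝ) = x j + 1 := by simp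
    have e2 : (((x - Pi.single j 1 : Fin d → ℤ) j : ℤ) : ℝ) = x j - 1 := by simp
    rw [e1, e2, if_pos rfl]
    linarith
  · have e1 : (((x + Pi.single j 1 : Fin d → ℤ) i : ℤ) : ℝ) = x i := by simp [Ne.symm h]
    have e2 : (((x - Pi.single j 1 : Fin d → ℤ) i : ℤ) : ℝ) = x i := by simp [Ne.symm h]
    rw [e1, e2, if_neg h]
    linarith

lemma qZd_sum {d : ℕ} (i : Fin d) (R : ℝ) (x : Fin d → ℤ) :
    ∑ j, (qZd i R (x + Pi.single j 1) + qZd i R (x - Pi.single j 1)) =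
      2 * d * qZd i R x - 2 := by
  simp_rw [qZd_pair]
  simp [Finset.sum_sub_distrib]
  ring

lemma grad_est {d : ℕ} (f : (Fin d → ℤ) → ℝ) (hf : HarmZd d f) (i : Fin d) (R : ℕ)
    (hR : 1 ≤ R) (M : ℝ) (hM : 0 < M)
    (hb : ∀ x : Fin d → ℤ, (∀ j, |x j| ≤ R) → |f x| ≤ M) :
    (f (Pi.single i 1) - f (-Pi.single i 1)) * R ≤ 2 * M * (d + 1) := by
  have hR' : (1 : ℝ) ≤ R := by exact_mod_cast hR
  set h : (Fin d → ℤ) → ℝ := fun x => 2 * M * qZd i R x - R ^ 2 * (f x - f (reflZd i x)) with hh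
  have hsum : ∀ x, ∑ j, (h (x + Pi.single j 1) + h (x - Pi.single j 1)) =
      2 * d * h x - 4 * M := by
    intro x
    have h1 := hf x
    have h2 := hf (reflZd i x)
    have h3 := qZd_sum i R x
    have : ∀ j, h (x + Pi.single j 1) + h (x - Pi.single j 1) =
      2 * M * (qZd i R (x + Pi.single j 1) + qZd i R (x - Pi.single j 1))
      - R ^ 2 * ((f (x + Pi.single j 1) + f (x - Pi.single j 1))
        - (f (reflZd i x + Pi.single j 1) + f (reflZd i x - Pi.single j 1))) := by
      intro j
      rw [← reflZd_pair]
      simp only [hh]; ring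
    simp_rw [this]
    rw [Finset.sum_sub_distrib, ← Finset.mul_sum, ← Finset.mul_sum, Finset.sum_sub_distrib,
      ← h1, ← h2, h3]
    simp only [hh]; ring
  let B : Finset (Fin d → ℤ) :=
    (Finset.Icc (fun _ => -(R : ℤ)) (fun _ => (R : ℤ))).filter (fun x => 0 ≤ x i)
  have hB : ∀ x, x ∈ B ↔ (∀ j, |x j| ≤ R) ∧ 0 ≤ x i := by
    intro x
    simp only [B, Finset.mem_filter, Finset.mem_Icc, Pi.le_def, abs_le, forall_and]
  have he : (Pi.single i 1 : Fin d → ℤ) ∈ B := by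
    rw [hB]
    refine ⟨fun j => ?_, by simp⟩
    by_cases hj : j = i
    · subst hj; simp; omega
    · simp [hj]
  obtain ⟨x, hxB, hmin⟩ := Finset.exists_min_image B h ⟨_, he⟩
  have hx := (hB x).1 hxB
  have hpos : 0 ≤ h x := by
    by_contra hneg
    push Not at hneg
    have hxi : (0 : ℝ) ≤ x i := by exact_mod_cast hx.2
    have hxR : (x i : ℝ) ≤ R := by exact_mod_cast (abs_le.1 (hx.1 i)).2
    have hF : f x - f (reflZd i x) ≤ 2 * M := by
      have a1 := hb x hx.1
      have a2 := hb (reflZd i x) (by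
        intro j
        by_cases hj : j = i
        · subst hj; simpa [reflZd] using hx.1 j
        · simpa [reflZd, hj] using hx.1 j)
      rw [abs_le] at a1 a2
      linarith
    have hint : ∀ j, |x j| < R := by
      intro j
      refine lt_of_le_of_ne (hx.1 j) fun hj => ?_
      have hj2 : (x j : ℝ) ^ 2 = R ^ 2 := by
        rw [← sq_abs]; congr 1; exact_mod_cast hj
      have hs : (x j : ℝ) ^ 2 ≤ ∑ k, (x k : ℝ) ^ 2 :=
        Finset.single_le_sum (f := fun k => (x k : ℝ) ^ 2) (fun k _ => sq_nonneg _)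
          (Finset.mem_univ j)
      have hq : (R : ℝ) ^ 2 ≤ qZd i R x := by
        unfold qZd
        have : 0 ≤ ((d : ℝ) + 1) * (x i * (R - x i)) := by
          have : (0 : ℝ) ≤ R - x i := by linarith
          positivity
        nlinarith
      have : 0 ≤ h x := by
        simp only [hh]
        have b1 := mul_le_mul_of_nonneg_left hq (by positivity : 0 ≤ 2 * M)
        have b2 := mul_le_mul_of_nonneg_left hF (by positivity : 0 ≤ (R : ℝ) ^ 2)
        linarith
      linarith
    have hipos : 0 < x i := by
      refine lt_of_le_of_ne hx.2 fun h0 => ?_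
      have hr : reflZd i x = x := by
        ext k
        by_cases hk : k = i
        · subst hk; simp [reflZd, ← h0]
        · simp [reflZd, hk]
      have : 0 ≤ h x := by
        simp only [hh, hr, qZd, ← h0]
        simp
        positivity
      linarith
    have hge : ∑ j : Fin d, 2 * h x ≤ ∑ j, (h (x + Pi.single j 1) + h (x - Pi.single j 1)) := by
      refine Finset.sum_le_sum fun j _ => ?_
      have m1 : x + Pi.single j 1 ∈ B := by
        rw [hB]
        constructor
        · intro k
          have := hint k
          rw [abs_lt] at this
          rw [abs_le]
          by_cases hk : k = j
          · subst hk; simp; omega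
          · simp [hk]; omega
        · by_cases hk : i = j
          · subst hk; simp; omega
          · simp [hk]; omega
      have m2 : x - Pi.single j 1 ∈ B := by
        rw [hB]
        constructor
        · intro k
          have := hint k
          rw [abs_lt] at this
          rw [abs_le]
          by_cases hk : k = j
          · subst hk; simp; omega
          · simp [hk]; omega
        · by_cases hk : i = j
          · subst hk; simp; omega
          · simp [hk]; omega
      have := hmin _ m1
      have := hmin _ m2
      linarith
    rw [hsum] at hge
    simp at hge
    linarith
  have hfin := hpos.trans (hmin _ he)
  have hr : reflZd i (Pi.single i 1) = -Pi.single i 1 := by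
    ext k
    by_cases hk : k = i
    · subst hk; simp [reflZd]
    · simp [reflZd, hk]
  have hq : qZd i R (Pi.single i 1) ≤ (d + 1) * R := by
    have : ∑ j, (((Pi.single i 1 : Fin d → ℤ) j : ℤ) : ℝ) ^ 2 = 1 := by
      rw [Finset.sum_eq_single i]
      · simp
      · intro b _ hb; simp [hb]
      · simp
    unfold qZd
    rw [this]
    simp
    have : (0 : ℝ) ≤ d := Nat.cast_nonneg d
    linarith
  simp only [hh, hr] at hfin
  have b1 := mul_le_mul_of_nonneg_left hq (by positivity : 0 ≤ 2 * M)
  have : (R : ℝ) * ((f (Pi.single i 1) - f (-Pi.single i 1)) * R) ≤ R * (2 * M * (d + 1)) := by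
    linarith
  exact le_of_mul_le_mul_left this (by linarith)

lemma step_le {d : ℕ} (f : (Fin d → ℤ) → ℝ) (hf : HarmZd d f)
    (hb : ∀ ε : ℝ, 0 < ε → ∃ K : ℝ, 0 ≤ K ∧ ∀ v : Fin d → ℤ, |f v| ≤ ε * (1 + ∑ i, |(v i : ℝ)|) + K)
    (v : Fin d → ℤ) (i : Fin d) : f (v + Pi.single i 1) ≤ f (v - Pi.single i 1) := by
  by_contra hcon
  push Not at hcon
  set D := f (v + Pi.single i 1) - f (v - Pi.single i 1) with hD
  have hD0 : 0 < D := by linarith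
  set ε := D / (4 * (d + 1) ^ 2) with hε
  have hε0 : 0 < ε := by positivity
  obtain ⟨K, hK, hbd⟩ := hb ε hε0
  set S := ∑ i, |(v i : ℝ)| with hS
  have hS0 : 0 ≤ S := Finset.sum_nonneg fun _ _ => abs_nonneg _
  have key : ∀ R : ℕ, 1 ≤ R → D * R ≤ 2 * (ε * (1 + (S + d * R)) + K) * (d + 1) := by
    intro R hR
    have := grad_est (fun x => f (v + x)) (by
      intro x
      have := hf (v + x)
      simpa [add_assoc, add_sub_assoc] using this) i R hR (ε * (1 + (S + d * R)) + K)
      (by positivity) (by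
        intro x hx
        refine (hbd (v + x)).trans ?_
        gcongr
        have : (d : ℝ) * R = ∑ j : Fin d, (R : ℝ) := by simp
        rw [this, hS, ← Finset.sum_add_distrib]
        refine Finset.sum_le_sum fun j _ => ?_
        have h1 : |(x j : ℝ)| ≤ R := by exact_mod_cast hx j
        have h2 := abs_add_le (v j : ℝ) (x j)
        simp only [Pi.add_apply, Int.cast_add]
        linarith)
    simpa [hD, sub_eq_add_neg] using this
  set C := 2 * (ε * (1 + S) + K) * (d + 1) with hC
  obtain ⟨n, hn⟩ := exists_nat_gt (2 * C / D)
  have k := key (n + 1) (by omega)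
  have hDe : D = ε * (4 * (d + 1) ^ 2) := by rw [hε]; field_simp
  have h3 : 2 * C < n * D := by rwa [div_lt_iff₀ hD0] at hn
  push_cast at k
  have hn0 : (0 : ℝ) ≤ n := Nat.cast_nonneg n
  have hd0 : (0 : ℝ) ≤ d := Nat.cast_nonneg d
  have h4 : 2 * ε * d * (n + 1) * (d + 1) ≤ D * (n + 1) / 2 := by
    rw [hDe]
    have : 0 ≤ ε * (n + 1) * (d + 1) := by positivity
    nlinarith
  nlinarith

lemma closed_univ {d : ℕ} (P : (Fin d → ℤ) → Prop) (v : Fin d → ℤ) (h0 : P v)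
    (h : ∀ x i, P x → P (x + Pi.single i 1) ∧ P (x - Pi.single i 1)) (w) : P w := by
  have hz : ∀ (i : Fin d) (n : ℤ) x, P x → P (x + Pi.single i n) := by
    intro i n x hx
    induction n using Int.induction_on with
    | zero => simpa using hx
    | succ n ih =>
      have := (h _ i ih).1
      rwa [add_assoc, ← Pi.single_add] at this
    | pred n ih =>
      have := (h _ i ih).2
      rwa [add_sub_assoc, ← Pi.single_sub] at this
  have hs : ∀ s : Finset (Fin d), P (v + ∑ i ∈ s, Pi.single i ((w - v) i)) := by
    intro s
    induction s using Finset.induction_on with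
    | empty => simpa using h0
    | insert a s ha ih =>
      rw [Finset.sum_insert ha, add_comm (Pi.single a _), ← add_assoc]
      exact hz _ _ _ ih
  have := hs Finset.univ
  rw [Finset.univ_sum_single] at this
  simpa using this

/-- A harmonic function of sublinear growth on the standard Cayley graph of `ℤ^d`
is constant.  Harmonicity: `2d · f(v) = Σᵢ (f(v + eᵢ) + f(v − eᵢ))`; sublinear growth:
`|f(v)|/(1 + Σᵢ|vᵢ|) → 0` as `v → ∞`. -/
theorem harmonic_sublinear_Zd_constant (d : ℕ) (hd : 1 ≤ d) (f : (Fin d → ℤ) → ℝ)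
    (hharm : ∀ v : Fin d → ℤ, (2 * d : ℝ) * f v =
      ∑ i : Fin d, (f (v + Pi.single i 1) + f (v - Pi.single i 1)))
    (hsub : Tendsto (fun v : Fin d → ℤ => |f v| / (1 + (∑ i, |v i| : ℤ))) cofinite
      (nhds 0)) :
    ∀ v w, f v = f w := by
  have hb : ∀ ε : ℝ, 0 < ε → ∃ K : ℝ, 0 ≤ K ∧
      ∀ v : Fin d → ℤ, |f v| ≤ ε * (1 + ∑ i, |(v i : ℝ)|) + K := by
    intro ε hε
    have hev := hsub.eventually (gt_mem_nhds hε)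
    rw [Filter.eventually_cofinite] at hev
    refine ⟨∑ v ∈ hev.toFinset, |f v|, Finset.sum_nonneg fun _ _ => abs_nonneg _, fun v => ?_⟩
    have hS0 : 0 ≤ ∑ i, |(v i : ℝ)| := Finset.sum_nonneg fun _ _ => abs_nonneg _
    have hK : 0 ≤ ∑ v ∈ hev.toFinset, |f v| := Finset.sum_nonneg fun _ _ => abs_nonneg _
    by_cases hv : v ∈ hev.toFinset
    · have := Finset.single_le_sum (f := fun v => |f v|) (fun k _ => abs_nonneg _) hv
      have : 0 ≤ ε * (1 + ∑ i, |(v i : ℝ)|) := by positivity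
      linarith
    · simp only [Set.Finite.mem_toFinset, Set.mem_ofPred_eq, not_not] at hv
      push_cast at hv
      rw [div_lt_iff₀ (by linarith)] at hv
      linarith
  have hper : ∀ (v : Fin d → ℤ) (i : Fin d), f (v + Pi.single i 1) = f (v - Pi.single i 1) := by
    intro v i
    apply le_antisymm (step_le f hharm hb v i)
    have := step_le (fun x => - f x) (by
      intro x
      have := hharm x
      have e : ∀ j : Fin d, -f (x + Pi.single j 1) + -f (x - Pi.single j 1) =
        -(f (x + Pi.single j 1) + f (x - Pi.single j 1)) := fun j => by ring
      simp_rw [e]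
      rw [Finset.sum_neg_distrib, ← this]; ring) (by simpa using hb) v i
    simpa using this
  -- the values of f are those on the cube {0,1}^d
  let B : Finset (Fin d → ℤ) := Finset.Icc 0 1
  have h0B : (0 : Fin d → ℤ) ∈ B := by
    simp only [B, Finset.mem_Icc, le_refl, true_and]
    exact fun _ => by simp
  obtain ⟨x, -, hx⟩ := Finset.exists_max_image B f ⟨0, h0B⟩
  have hval : ∀ w, ∃ b ∈ B, f w = f b := by
    intro w
    have := closed_univ (fun n => f (w + (n + n)) = f w) 0 (by simp) (by
      intro n i hn
      constructor
      · have := hper (w + (n + n) + Pi.single i 1) i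
        rw [add_sub_cancel_right, hn] at this
        rw [← this]; congr 1; abel
      · have := hper (w + (n + n) - Pi.single i 1) i
        rw [sub_add_cancel, hn] at this
        rw [this]; congr 1; abel) (fun i => -(w i / 2))
    refine ⟨_, ?_, this.symm⟩
    simp only [B, Finset.mem_Icc, Pi.le_def, Pi.add_apply, Pi.zero_apply, Pi.one_apply]
    constructor <;> intro i <;> omega
  have hmax : ∀ w, f w ≤ f x := by
    intro w
    obtain ⟨b, hbB, e⟩ := hval w
    rw [e]; exact hx b hbB
  have hall : ∀ w, f w = f x := by
    refine closed_univ (fun w => f w = f x) x rfl ?_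
    intro y i hy
    have hs := hharm y
    have h1 : ∑ j : Fin d, (f (y + Pi.single j 1) + f (y - Pi.single j 1)) =
        ∑ j : Fin d, 2 * f x := by
      rw [← hs, hy]; simp; ring
    rw [Finset.sum_eq_sum_iff_of_le] at h1
    · have h2 := h1 i (Finset.mem_univ i)
      have h3 := hmax (y + Pi.single i 1)
      have h4 := hmax (y - Pi.single i 1)
      constructor <;> linarith
    · intro j _
      have h3 := hmax (y + Pi.single j 1)
      have h4 := hmax (y - Pi.single j 1)
      linarith
  intro v w
  rw [hall v, hall w]
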